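/- arXiv:2508.11972 — 2 statements merged into one kernel-verified Lean document; each statement's English description precedes it below -/
import Mathlib

section
/- For every L_⊳-formula φ: φ ∈ ICK if and only if φ is valid on every conditional Kripke frame (soundness and completeness of ICK with respect to conditional Kripke frames). -/
/-! ## The conditional language `L_⊳` -/

/-- Formulas of the conditional language `L_⊳`, with proposition letters
indexed by the countable set `ℕ`. -/
inductive CForm : Type where
  | var : ℕ → CForm
  | bot : CForm
  | and : CForm → CForm → CForm
  | or : CForm → CForm → CForm
  | imp : CForm → CForm → CForm
  | cond : CForm → CForm → CForm

/-- `⊤ := ⊥ → ⊥`. -/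
def cTop : CForm := CForm.imp CForm.bot CForm.bot

/-- `φ ↔ ψ := (φ → ψ) ∧ (ψ → φ)`. -/
def cIff (φ ψ : CForm) : CForm := CForm.and (CForm.imp φ ψ) (CForm.imp ψ φ)

/-- Uniform substitution of formulas for proposition letters. -/
def psubst (σ : ℕ → CForm) : CForm → CForm
  | CForm.var q => σ q
  | CForm.bot => CForm.bot
  | CForm.and φ ψ => CForm.and (psubst σ φ) (psubst σ ψ)
  | CForm.or φ ψ => CForm.or (psubst σ φ) (psubst σ ψ)
  | CForm.imp φ ψ => CForm.imp (psubst σ φ) (psubst σ ψ)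
  | CForm.cond φ ψ => CForm.cond (psubst σ φ) (psubst σ ψ)

/-- The logic `ICK ⊕ Γ`: the smallest set of `L_⊳`-formulas containing an
axiomatisation of intuitionistic propositional logic, the formulas of `Γ`, the
axioms `(k_c)` and `(n_c)`, closed under uniform substitution, modus ponens and
the two congruence rules. -/
inductive ICK (Γ : Set CForm) : CForm → Prop where
  | prem {φ : CForm} : φ ∈ Γ → ICK Γ φ
  | a1 : ICK Γ (CForm.imp (CForm.and (CForm.var 0) (CForm.var 1)) (CForm.var 0))
  | a2 : ICK Γ (CForm.imp (CForm.and (CForm.var 0) (CForm.var 1)) (CForm.var 1))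
  | a3 : ICK Γ (CForm.imp (CForm.imp (CForm.var 0) (CForm.var 1))
      (CForm.imp (CForm.imp (CForm.var 0) (CForm.var 2))
        (CForm.imp (CForm.var 0) (CForm.and (CForm.var 1) (CForm.var 2)))))
  | a4 : ICK Γ (CForm.imp (CForm.var 0) (CForm.or (CForm.var 0) (CForm.var 1)))
  | a5 : ICK Γ (CForm.imp (CForm.var 1) (CForm.or (CForm.var 0) (CForm.var 1)))
  | a6 : ICK Γ (CForm.imp (CForm.imp (CForm.var 0) (CForm.var 2))
      (CForm.imp (CForm.imp (CForm.var 1) (CForm.var 2))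
        (CForm.imp (CForm.or (CForm.var 0) (CForm.var 1)) (CForm.var 2))))
  | a7 : ICK Γ (CForm.imp CForm.bot (CForm.var 0))
  | a8 : ICK Γ (CForm.imp (CForm.var 0) (CForm.imp (CForm.var 1) (CForm.var 0)))
  | a9 : ICK Γ (CForm.imp
      (CForm.imp (CForm.var 0) (CForm.imp (CForm.var 1) (CForm.var 2)))
      (CForm.imp (CForm.imp (CForm.var 0) (CForm.var 1))
        (CForm.imp (CForm.var 0) (CForm.var 2))))
  | kc : ICK Γ (cIff (CForm.cond (CForm.var 0) (CForm.and (CForm.var 1) (CForm.var 2)))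
      (CForm.and (CForm.cond (CForm.var 0) (CForm.var 1))
        (CForm.cond (CForm.var 0) (CForm.var 2))))
  | nc : ICK Γ (cIff (CForm.cond (CForm.var 0) cTop) cTop)
  | subst {φ : CForm} (σ : ℕ → CForm) : ICK Γ φ → ICK Γ (psubst σ φ)
  | mp {φ ψ : CForm} : ICK Γ (CForm.imp φ ψ) → ICK Γ φ → ICK Γ ψ
  | congL {φ ψ χ : CForm} :
      ICK Γ (cIff φ ψ) → ICK Γ (cIff (CForm.cond φ χ) (CForm.cond ψ χ))
  | congR {φ ψ χ : CForm} :
      ICK Γ (cIff φ ψ) → ICK Γ (cIff (CForm.cond χ φ) (CForm.cond χ ψ))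

/-! ## Conditional Kripke frames and semantics -/

/-- `a` is an upset (upward closed set) w.r.t. the relation `le`. -/
def IsUpset {X : Type} (le : X → X → Prop) (a : Set X) : Prop :=
  ∀ ⦃x y : X⦄, le x y → x ∈ a → y ∈ a

/-- The upward closure `↑s` of a set `s` w.r.t. the relation `le`. -/
def upCl {X : Type} (le : X → X → Prop) (s : Set X) : Set X :=
  {z | ∃ y ∈ s, le y z}

/-- Truth sets of `L_⊳`-formulas, by intuitionistic Kripke semantics for the
propositional connectives, where `x ⊨ φ ⊳ ψ` iff every `y` with
`x R_{V(φ)} y` satisfies `ψ` (here `V(φ)` is the truth set of `φ`). -/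
def csat {X : Type} (le : X → X → Prop) (R : Set X → X → X → Prop)
    (V : ℕ → Set X) : CForm → Set X
  | CForm.var p => V p
  | CForm.bot => ∅
  | CForm.and φ ψ => csat le R V φ ∩ csat le R V ψ
  | CForm.or φ ψ => csat le R V φ ∪ csat le R V ψ
  | CForm.imp φ ψ => {x | ∀ y, le x y → y ∈ csat le R V φ → y ∈ csat le R V ψ}
  | CForm.cond φ ψ => {x | ∀ y, R (csat le R V φ) x y → y ∈ csat le R V ψ}

/-- A conditional Kripke frame: a nonempty preordered set `(X, le)` with a
family of relations `R a` (indexed by the upsets `a`) satisfying the coherence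
condition `(≤ ∘ R_a) ⊆ (R_a ∘ ≤)`. -/
structure CondFrame where
  X : Type
  ne : Nonempty X
  le : X → X → Prop
  le_refl : ∀ x, le x x
  le_trans : ∀ ⦃x y z⦄, le x y → le y z → le x z
  R : Set X → X → X → Prop
  coh : ∀ a : Set X, IsUpset le a →
    ∀ ⦃x y z⦄, le x y → R a y z → ∃ w, R a x w ∧ le w z

/-- Validity on a conditional Kripke frame: truth at every world under every
valuation of the proposition letters by upsets. -/
def CondFrame.valid (F : CondFrame) (φ : CForm) : Prop :=
  ∀ V : ℕ → Set F.X, (∀ p, IsUpset F.le (V p)) → ∀ x, x ∈ csat F.le F.R V φ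

/-! ## Conditional Heyting algebras -/

/-- A conditional Heyting algebra: a Heyting algebra with a binary operation
`cond` (written `⊳` in the paper) preserving finite meets in its second
argument. -/
class CondHeyting (A : Type) extends HeytingAlgebra A where
  cond : A → A → A
  cond_inf : ∀ a b c : A, cond a (b ⊓ c) = cond a b ⊓ cond a c
  cond_top : ∀ a : A, cond a ⊤ = ⊤

/-- Evaluation of an `L_⊳`-formula in a conditional Heyting algebra under an
assignment `σ` of the proposition letters. -/
def evalCHA {A : Type} [CondHeyting A] (σ : ℕ → A) : CForm → A
  | CForm.var p => σ p
  | CForm.bot => ⊥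
  | CForm.and φ ψ => evalCHA σ φ ⊓ evalCHA σ ψ
  | CForm.or φ ψ => evalCHA σ φ ⊔ evalCHA σ ψ
  | CForm.imp φ ψ => evalCHA σ φ ⇨ evalCHA σ ψ
  | CForm.cond φ ψ => CondHeyting.cond (evalCHA σ φ) (evalCHA σ ψ)

/-- A formula is satisfied in a conditional Heyting algebra if it evaluates to
`⊤` under every assignment. -/
def chaSat (A : Type) [CondHeyting A] (φ : CForm) : Prop :=
  ∀ σ : ℕ → A, evalCHA σ φ = ⊤

/-- A prime filter: a proper, nonempty, upward closed subset, closed under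
binary meets, such that `a ⊔ b ∈ x` implies `a ∈ x` or `b ∈ x`. -/
def IsPrimeFilter {A : Type} [Lattice A] (x : Set A) : Prop :=
  x.Nonempty ∧ x ≠ Set.univ ∧
  (∀ ⦃a b : A⦄, a ∈ x → a ≤ b → b ∈ x) ∧
  (∀ ⦃a b : A⦄, a ∈ x → b ∈ x → a ⊓ b ∈ x) ∧
  (∀ ⦃a b : A⦄, a ⊔ b ∈ x → a ∈ x ∨ b ∈ x)

/-! ## General conditional frames -/

/-- A general conditional frame `(X, ≤, 𝓡, A)`. -/
structure GenFrame where
  X : Type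
  le : X → X → Prop
  le_refl : ∀ x, le x x
  le_trans : ∀ ⦃x y z⦄, le x y → le y z → le x z
  le_antisymm : ∀ ⦃x y⦄, le x y → le y x → x = y
  A : Set (Set X)
  upA : ∀ a ∈ A, IsUpset le a
  univ_mem : Set.univ ∈ A
  empty_mem : ∅ ∈ A
  inter_mem : ∀ a ∈ A, ∀ b ∈ A, a ∩ b ∈ A
  union_mem : ∀ a ∈ A, ∀ b ∈ A, a ∪ b ∈ A
  R : Set X → X → X → Prop
  himp_mem : ∀ a ∈ A, ∀ b ∈ A, {x | ∀ y, le x y → y ∈ a → y ∈ b} ∈ A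
  cimp_mem : ∀ a ∈ A, ∀ b ∈ A, {x | ∀ y, R a x y → y ∈ b} ∈ A
  coh : ∀ a ∈ A, ∀ ⦃x y z⦄, le x y → R a y z → ∃ w, R a x w ∧ le w z

/-- The carrier of the complex algebra of a general frame: the admissible
upsets. -/
def GenFrame.AUp (G : GenFrame) : Type := {a : Set G.X // a ∈ G.A}

instance GenFrame.instLatticeAUp (G : GenFrame) : Lattice G.AUp where
  le a b := a.val ⊆ b.val
  le_refl a := subset_rfl
  le_trans a b c h h' := Set.Subset.trans h h'
  le_antisymm a b h h' := Subtype.ext (subset_antisymm h h')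
  sup a b := ⟨a.val ∪ b.val, G.union_mem _ a.2 _ b.2⟩
  le_sup_left a b := Set.subset_union_left
  le_sup_right a b := Set.subset_union_right
  sup_le a b c h h' := Set.union_subset h h'
  inf a b := ⟨a.val ∩ b.val, G.inter_mem _ a.2 _ b.2⟩
  inf_le_left a b := Set.inter_subset_left
  inf_le_right a b := Set.inter_subset_right
  le_inf a b c h h' := Set.subset_inter h h'

instance GenFrame.instHeytingAUp (G : GenFrame) : HeytingAlgebra G.AUp :=
  { GenFrame.instLatticeAUp G with
    top := ⟨Set.univ, G.univ_mem⟩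
    le_top := fun a => Set.subset_univ _
    bot := ⟨∅, G.empty_mem⟩
    bot_le := fun a => Set.empty_subset _
    himp := fun a b => ⟨{x | ∀ y, G.le x y → y ∈ a.val → y ∈ b.val},
      G.himp_mem _ a.2 _ b.2⟩
    compl := fun a => ⟨{x | ∀ y, G.le x y → y ∈ a.val → y ∈ (∅ : Set G.X)},
      G.himp_mem _ a.2 _ G.empty_mem⟩
    le_himp_iff := by
      intro a b c
      show a.val ⊆ {x | ∀ y, G.le x y → y ∈ b.val → y ∈ c.val} ↔
        a.val ∩ b.val ⊆ c.val
      constructor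
      · rintro h x ⟨hxa, hxb⟩
        exact h hxa x (G.le_refl x) hxb
      · intro h x hxa y hle hyb
        exact h ⟨G.upA a.val a.2 hle hxa, hyb⟩
    himp_bot := fun a => rfl }

/-- The complex algebra `AUp(G)` of a general frame `G` is a conditional
Heyting algebra, with `a ⊳ b := {x | R_a[x] ⊆ b}`. -/
instance GenFrame.instCondHeytingAUp (G : GenFrame) : CondHeyting G.AUp where
  cond a b := ⟨{x | ∀ y, G.R a.val x y → y ∈ b.val}, G.cimp_mem _ a.2 _ b.2⟩
  cond_inf a b c := Subtype.ext (Set.ext fun x => by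
    show (∀ y, G.R a.val x y → y ∈ b.val ∩ c.val) ↔
      (∀ y, G.R a.val x y → y ∈ b.val) ∧ (∀ y, G.R a.val x y → y ∈ c.val)
    constructor
    · intro h
      exact ⟨fun y hy => (h y hy).1, fun y hy => (h y hy).2⟩
    · rintro ⟨h1, h2⟩ y hy
      exact ⟨h1 y hy, h2 y hy⟩)
  cond_top a := Subtype.ext (Set.ext fun x => by
    show (∀ y, G.R a.val x y → y ∈ (Set.univ : Set G.X)) ↔
      x ∈ (Set.univ : Set G.X)
    exact ⟨fun _ => trivial, fun _ y _ => trivial⟩)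

/-! ## Conditional Esakia spaces -/

/-- A conditional Esakia space: an Esakia space `(X, le, top)` together with a
family of relations `R a` indexed by the clopen upsets `a`, such that
`{x | R_a[x] ⊆ b}` is clopen for clopen upsets `a, b`, each `R_a[x]` is
closed, and `(≤ ∘ R_a ∘ ≤) = R_a`. -/
structure CondEsakia where
  X : Type
  ne : Nonempty X
  le : X → X → Prop
  le_refl : ∀ x, le x x
  le_trans : ∀ ⦃x y z⦄, le x y → le y z → le x z
  le_antisymm : ∀ ⦃x y⦄, le x y → le y x → x = y
  top : TopologicalSpace X
  compact : @CompactSpace X top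
  sep : ∀ x y : X, ¬ le x y →
    ∃ a : Set X, @IsClopen X top a ∧ IsUpset le a ∧ x ∈ a ∧ y ∉ a
  down_clopen : ∀ a : Set X, @IsClopen X top a →
    @IsClopen X top {x | ∃ y ∈ a, le x y}
  R : Set X → X → X → Prop
  box_clopen : ∀ a b : Set X, @IsClopen X top a → IsUpset le a →
    @IsClopen X top b → IsUpset le b →
    @IsClopen X top {x | ∀ y, R a x y → y ∈ b}
  coh : ∀ a : Set X, @IsClopen X top a → IsUpset le a →
    ∀ x z : X, (∃ x' y', le x x' ∧ R a x' y' ∧ le y' z) ↔ R a x z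
  im_closed : ∀ a : Set X, @IsClopen X top a → IsUpset le a →
    ∀ x : X, @IsClosed X top {y | R a x y}

/-- `a` is a clopen upset of the conditional Esakia space `S`. -/
def CondEsakia.ClopUp (S : CondEsakia) (a : Set S.X) : Prop :=
  @IsClopen S.X S.top a ∧ IsUpset S.le a

/-- Validity on a conditional Esakia space: truth at every world under every
valuation of the proposition letters by clopen upsets. -/
def CondEsakia.valid (S : CondEsakia) (φ : CForm) : Prop :=
  ∀ V : ℕ → Set S.X, (∀ p, S.ClopUp (V p)) → ∀ x, x ∈ csat S.le S.R V φ

/-- The family of relations of the empty fill-in `κ_∅(S)`: it agrees with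
`S.R` on clopen upsets and is empty on all other sets. -/
def CondEsakia.emptyFill (S : CondEsakia) : Set S.X → S.X → S.X → Prop :=
  fun a x y => S.ClopUp a ∧ S.R a x y

/-- Validity on the empty fill-in `κ_∅(S)`, a conditional Kripke frame:
truth at every world under every valuation by (arbitrary) upsets. -/
def CondEsakia.emptyFillValid (S : CondEsakia) (φ : CForm) : Prop :=
  ∀ V : ℕ → Set S.X, (∀ p, IsUpset S.le (V p)) →
    ∀ x, x ∈ csat S.le S.emptyFill V φ

/-! ## The modal language `L_□` -/

/-- Formulas of the modal language `L_□`. -/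
inductive MForm : Type where
  | var : ℕ → MForm
  | bot : MForm
  | and : MForm → MForm → MForm
  | or : MForm → MForm → MForm
  | imp : MForm → MForm → MForm
  | box : MForm → MForm

/-- The translation `(−)^p : L_□ → L_⊳`: it fixes proposition letters, `⊥`,
`∧`, `∨`, `→`, and sends `□ψ` to `p ⊳ ψ^p`. -/
def MForm.transl (p : ℕ) : MForm → CForm
  | MForm.var q => CForm.var q
  | MForm.bot => CForm.bot
  | MForm.and φ ψ => CForm.and (φ.transl p) (ψ.transl p)
  | MForm.or φ ψ => CForm.or (φ.transl p) (ψ.transl p)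
  | MForm.imp φ ψ => CForm.imp (φ.transl p) (ψ.transl p)
  | MForm.box φ => CForm.cond (CForm.var p) (φ.transl p)

/-- The proposition letter `p` occurs (as a subformula) in a modal formula. -/
def MForm.occurs (p : ℕ) : MForm → Prop
  | MForm.var q => p = q
  | MForm.bot => False
  | MForm.and φ ψ => φ.occurs p ∨ ψ.occurs p
  | MForm.or φ ψ => φ.occurs p ∨ ψ.occurs p
  | MForm.imp φ ψ => φ.occurs p ∨ ψ.occurs p
  | MForm.box φ => φ.occurs p

/-- Truth sets of `L_□`-formulas in a modal model, by intuitionistic Kripke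
semantics with `x ⊨ □φ` iff every `y` with `x R y` satisfies `φ`. -/
def msat {X : Type} (le : X → X → Prop) (R : X → X → Prop)
    (V : ℕ → Set X) : MForm → Set X
  | MForm.var p => V p
  | MForm.bot => ∅
  | MForm.and φ ψ => msat le R V φ ∩ msat le R V ψ
  | MForm.or φ ψ => msat le R V φ ∪ msat le R V ψ
  | MForm.imp φ ψ => {x | ∀ y, le x y → y ∈ msat le R V φ → y ∈ msat le R V ψ}
  | MForm.box φ => {x | ∀ y, R x y → y ∈ msat le R V φ}

/-- A modal Esakia space: an Esakia space with a relation `R` such that each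
`R[x]` is closed and `R = (≤ ∘ R ∘ ≤)`. -/
structure ModalEsakia where
  X : Type
  ne : Nonempty X
  le : X → X → Prop
  le_refl : ∀ x, le x x
  le_trans : ∀ ⦃x y z⦄, le x y → le y z → le x z
  le_antisymm : ∀ ⦃x y⦄, le x y → le y x → x = y
  top : TopologicalSpace X
  compact : @CompactSpace X top
  sep : ∀ x y : X, ¬ le x y →
    ∃ a : Set X, @IsClopen X top a ∧ IsUpset le a ∧ x ∈ a ∧ y ∉ a
  down_clopen : ∀ a : Set X, @IsClopen X top a →
    @IsClopen X top {x | ∃ y ∈ a, le x y}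
  R : X → X → Prop
  im_closed : ∀ x : X, @IsClosed X top {y | R x y}
  coh : ∀ x z : X, (∃ x' y', le x x' ∧ R x' y' ∧ le y' z) ↔ R x z

/-- Validity on a modal Esakia space: truth everywhere under every valuation
by clopen upsets. -/
def ModalEsakia.valid (M : ModalEsakia) (φ : MForm) : Prop :=
  ∀ V : ℕ → Set M.X, (∀ p, @IsClopen M.X M.top (V p) ∧ IsUpset M.le (V p)) →
    ∀ x, x ∈ msat M.le M.R V φ

/-- Validity on the underlying modal frame `κ(M)` of a modal Esakia space:
truth everywhere under every valuation by arbitrary upsets. -/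
def ModalEsakia.frameValid (M : ModalEsakia) (φ : MForm) : Prop :=
  ∀ V : ℕ → Set M.X, (∀ p, IsUpset M.le (V p)) → ∀ x, x ∈ msat M.le M.R V φ

/-- An `L_□`-formula is d-persistent if its validity on a modal Esakia space
implies its validity on the underlying modal frame. -/
def DPersistent (φ : MForm) : Prop :=
  ∀ M : ModalEsakia, M.valid φ → M.frameValid φ

/-!
Soundness is a direct check on truth sets. For completeness, provable equivalence turns the formulas
into a conditional Heyting algebra `A` in which only the theorems are equal to `⊤`. A nontrivial
`A` embeds into the upsets of a conditional Kripke frame: the worlds are the prime filters of `A`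
ordered by inclusion, `a` is sent to `hat a`, the set of prime filters containing it, and
`x R_(hat a) y` means that `a ⊳ c ∈ x` implies `c ∈ y`. Both `a ⇨ ·` and `a ⊳ ·` preserve finite
meets, so pulling a prime filter back along either one gives a filter; the prime ideal theorem
separates that filter from any element outside it, which is what the embedding needs.
-/

/-! ### Soundness -/

namespace CondFrame

variable {F : CondFrame} {φ ψ : CForm}

theorem isUpset_csat {V : ℕ → Set F.X} (hV : ∀ p, IsUpset F.le (V p)) (φ : CForm) :
    IsUpset F.le (csat F.le F.R V φ) := by
  induction φ with
  | var p => exact hV p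
  | bot => exact fun _ _ _ hx => hx
  | and φ ψ ihφ ihψ => exact fun _ _ hxy hx => ⟨ihφ hxy hx.1, ihψ hxy hx.2⟩
  | or φ ψ ihφ ihψ => exact fun _ _ hxy hx => hx.imp (ihφ hxy) (ihψ hxy)
  | imp φ ψ _ _ => exact fun _ _ hxy hx z hyz => hx z (F.le_trans hxy hyz)
  | cond φ ψ ihφ ihψ =>
    intro x y hxy hx z hyz
    obtain ⟨w, hxw, hwz⟩ := F.coh _ ihφ hxy hyz
    exact ihψ hwz (hx w hxw)

theorem valid_imp_iff : F.valid (.imp φ ψ) ↔ ∀ V : ℕ → Set F.X, (∀ p, IsUpset F.le (V p)) →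
    csat F.le F.R V φ ⊆ csat F.le F.R V ψ :=
  ⟨fun h V hV x => h V hV x x (F.le_refl x), fun h V hV _ _ _ hy => h V hV hy⟩

theorem valid_cIff_iff : F.valid (cIff φ ψ) ↔ ∀ V : ℕ → Set F.X, (∀ p, IsUpset F.le (V p)) →
    csat F.le F.R V φ = csat F.le F.R V ψ :=
  ⟨fun h V hV => (valid_imp_iff.1 (fun V hV x => (h V hV x).1) V hV).antisymm
      (valid_imp_iff.1 (fun V hV x => (h V hV x).2) V hV),
    fun h V hV x => ⟨valid_imp_iff.2 (fun V hV => (h V hV).subset) V hV x,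
      valid_imp_iff.2 (fun V hV => (h V hV).superset) V hV x⟩⟩

end CondFrame

theorem csat_psubst {X : Type} (le : X → X → Prop) (R : Set X → X → X → Prop) (V : ℕ → Set X)
    (σ : ℕ → CForm) (φ : CForm) :
    csat le R V (psubst σ φ) = csat le R (fun p => csat le R V (σ p)) φ := by
  induction φ with
  | var | bot => rfl
  | and _ _ ihφ ihψ | or _ _ ihφ ihψ | imp _ _ ihφ ihψ | cond _ _ ihφ ihψ =>
    simp only [psubst, csat, ihφ, ihψ]

theorem CondFrame.valid_of_ick {F : CondFrame} {Γ : Set CForm} {φ : CForm}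
    (hΓ : ∀ γ ∈ Γ, F.valid γ) (h : ICK Γ φ) : F.valid φ := by
  induction h with
  | prem hφ => exact hΓ _ hφ
  | a1 => exact valid_imp_iff.2 fun _ _ => Set.inter_subset_left
  | a2 => exact valid_imp_iff.2 fun _ _ => Set.inter_subset_right
  | a3 =>
    exact valid_imp_iff.2 fun V _ x h01 y hxy h02 z hyz hz =>
      ⟨h01 z (F.le_trans hxy hyz) hz, h02 z hyz hz⟩
  | a4 => exact valid_imp_iff.2 fun _ _ => Set.subset_union_left
  | a5 => exact valid_imp_iff.2 fun _ _ => Set.subset_union_right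
  | a6 =>
    exact valid_imp_iff.2 fun V _ x h02 y hxy h12 z hyz hz =>
      hz.elim (h02 z (F.le_trans hxy hyz)) (h12 z hyz)
  | a7 => exact valid_imp_iff.2 fun _ _ => Set.empty_subset _
  | a8 => exact valid_imp_iff.2 fun V hV x hx y hxy _ => hV 0 hxy hx
  | a9 =>
    exact valid_imp_iff.2 fun V _ x h012 y hxy h01 z hyz hz =>
      h012 z (F.le_trans hxy hyz) hz z (F.le_refl z) (h01 z hyz hz)
  | kc =>
    exact valid_cIff_iff.2 fun V _ => Set.ext fun x =>
      ⟨fun h => ⟨fun y hy => (h y hy).1, fun y hy => (h y hy).2⟩,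
        fun h y hy => ⟨h.1 y hy, h.2 y hy⟩⟩
  | nc =>
    exact valid_cIff_iff.2 fun V _ => Set.ext fun x =>
      ⟨fun _ _ _ hz => hz, fun _ _ _ _ _ hz => hz⟩
  | subst σ _ ih =>
    intro V hV x
    rw [csat_psubst]
    exact ih _ (fun p => isUpset_csat hV (σ p)) x
  | mp _ _ ihimp ih => exact fun V hV x => valid_imp_iff.1 ihimp V hV (ih V hV x)
  | congL _ ih | congR _ ih =>
    exact valid_cIff_iff.2 fun V hV => by simp only [csat, valid_cIff_iff.1 ih V hV]

/-! ### Derivations in `ICK` -/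

namespace ICK

/-- The substitution of `φ`, `ψ`, `χ` for the letters `0`, `1`, `2`, the only ones that occur in the
axioms of `ICK`. -/
def axiomSubst (φ ψ χ : CForm) : ℕ → CForm
  | 0 => φ
  | 1 => ψ
  | _ => χ

variable {Γ : Set CForm} {φ ψ χ : CForm}

theorem imp_of (h : ICK Γ φ) : ICK Γ (.imp ψ φ) :=
  mp (subst (axiomSubst φ ψ φ) a8) h

theorem imp_mp (h : ICK Γ (.imp φ (.imp ψ χ))) (k : ICK Γ (.imp φ ψ)) : ICK Γ (.imp φ χ) :=
  mp (mp (subst (axiomSubst φ ψ χ) a9) h) k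

theorem imp_self (φ : CForm) : ICK Γ (.imp φ φ) :=
  imp_mp (subst (axiomSubst φ (.imp φ φ) φ) a8) (subst (axiomSubst φ φ φ) a8)

theorem imp_trans (h : ICK Γ (.imp φ ψ)) (k : ICK Γ (.imp ψ χ)) : ICK Γ (.imp φ χ) :=
  imp_mp (imp_of k) h

theorem and_imp_left (φ ψ : CForm) : ICK Γ (.imp (.and φ ψ) φ) :=
  subst (axiomSubst φ ψ φ) a1

theorem and_imp_right (φ ψ : CForm) : ICK Γ (.imp (.and φ ψ) ψ) :=
  subst (axiomSubst φ ψ ψ) a2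

theorem imp_and (h : ICK Γ (.imp φ ψ)) (k : ICK Γ (.imp φ χ)) : ICK Γ (.imp φ (.and ψ χ)) :=
  mp (mp (subst (axiomSubst φ ψ χ) a3) h) k

theorem imp_or_left (φ ψ : CForm) : ICK Γ (.imp φ (.or φ ψ)) :=
  subst (axiomSubst φ ψ φ) a4

theorem imp_or_right (φ ψ : CForm) : ICK Γ (.imp ψ (.or φ ψ)) :=
  subst (axiomSubst φ ψ φ) a5

theorem or_imp (h : ICK Γ (.imp φ χ)) (k : ICK Γ (.imp ψ χ)) : ICK Γ (.imp (.or φ ψ) χ) :=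
  mp (mp (subst (axiomSubst φ ψ χ) a6) h) k

theorem bot_imp (φ : CForm) : ICK Γ (.imp .bot φ) :=
  subst (axiomSubst φ φ φ) a7

theorem imp_imp_and (φ ψ : CForm) : ICK Γ (.imp φ (.imp ψ (.and φ ψ))) :=
  have imp_left : ICK Γ (.imp φ (.imp ψ φ)) := subst (axiomSubst φ ψ φ) a8
  have pair : ICK Γ (.imp (.imp ψ φ) (.imp (.imp ψ ψ) (.imp ψ (.and φ ψ)))) :=
    subst (axiomSubst ψ φ ψ) a3
  imp_mp (imp_trans imp_left pair) (imp_of (imp_self ψ))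

theorem imp_imp_iff : ICK Γ (.imp φ (.imp ψ χ)) ↔ ICK Γ (.imp (.and φ ψ) χ) where
  mp h := imp_mp (imp_trans (and_imp_left φ ψ) h) (and_imp_right φ ψ)
  mpr h := imp_trans (imp_imp_and φ ψ) (mp (subst (axiomSubst ψ (.and φ ψ) χ) a9) (imp_of h))

theorem cIff_iff : ICK Γ (cIff φ ψ) ↔ ICK Γ (.imp φ ψ) ∧ ICK Γ (.imp ψ φ) where
  mp h := ⟨mp (and_imp_left _ _) h, mp (and_imp_right _ _) h⟩
  mpr h := mp (mp (imp_imp_and _ _) h.1) h.2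

theorem and_mono {φ' ψ' : CForm} (h : ICK Γ (.imp φ φ')) (k : ICK Γ (.imp ψ ψ')) :
    ICK Γ (.imp (.and φ ψ) (.and φ' ψ')) :=
  imp_and (imp_trans (and_imp_left φ ψ) h) (imp_trans (and_imp_right φ ψ) k)

theorem or_mono {φ' ψ' : CForm} (h : ICK Γ (.imp φ φ')) (k : ICK Γ (.imp ψ ψ')) :
    ICK Γ (.imp (.or φ ψ) (.or φ' ψ')) :=
  or_imp (imp_trans h (imp_or_left φ' ψ')) (imp_trans k (imp_or_right φ' ψ'))

theorem imp_mono {φ' ψ' : CForm} (h : ICK Γ (.imp φ' φ)) (k : ICK Γ (.imp ψ ψ')) :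
    ICK Γ (.imp (.imp φ ψ) (.imp φ' ψ')) :=
  have modus_ponens : ICK Γ (.imp (.and (.imp φ ψ) φ) ψ) := imp_imp_iff.1 (imp_self _)
  imp_imp_iff.2 (imp_trans (and_mono (imp_self _) h) (imp_trans modus_ponens k))

theorem cond_congr {φ' ψ' : CForm} (h : ICK Γ (cIff φ φ')) (k : ICK Γ (cIff ψ ψ')) :
    ICK Γ (cIff (.cond φ ψ) (.cond φ' ψ')) :=
  have left := cIff_iff.1 (congL (χ := ψ) h)
  have right := cIff_iff.1 (congR (χ := φ') k)
  cIff_iff.2 ⟨imp_trans left.1 right.1, imp_trans right.2 left.2⟩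

end ICK

/-! ### The Lindenbaum algebra -/

/-- The preorder of provable implication in `ICK ⊕ Γ`. -/
abbrev ICK.preorder (Γ : Set CForm) : Preorder CForm where
  le φ ψ := ICK Γ (.imp φ ψ)
  le_refl := ICK.imp_self
  le_trans _ _ _ := ICK.imp_trans

/-- The Lindenbaum algebra of `ICK ⊕ Γ`: formulas modulo provable equivalence. -/
def Lindenbaum (Γ : Set CForm) : Type :=
  letI := ICK.preorder Γ
  Antisymmetrization CForm (· ≤ ·)

namespace Lindenbaum

variable {Γ : Set CForm}

instance : PartialOrder (Lindenbaum Γ) :=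
  @instPartialOrderAntisymmetrization CForm (ICK.preorder Γ)

/-- The class of a formula in the Lindenbaum algebra. -/
def mk (Γ : Set CForm) (φ : CForm) : Lindenbaum Γ :=
  letI := ICK.preorder Γ
  toAntisymmetrization (· ≤ ·) φ

instance : HeytingAlgebra (Lindenbaum Γ) where
  inf := Quotient.map₂ .and fun _ _ h _ _ k => ⟨.and_mono h.1 k.1, .and_mono h.2 k.2⟩
  sup := Quotient.map₂ .or fun _ _ h _ _ k => ⟨.or_mono h.1 k.1, .or_mono h.2 k.2⟩
  himp := Quotient.map₂ .imp fun _ _ h _ _ k => ⟨.imp_mono h.2 k.1, .imp_mono h.1 k.2⟩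
  compl := Quotient.map (.imp · .bot) fun _ _ h =>
    ⟨.imp_mono h.2 (.imp_self _), .imp_mono h.1 (.imp_self _)⟩
  bot := mk Γ .bot
  top := mk Γ cTop
  inf_le_left := by rintro ⟨φ⟩ ⟨ψ⟩; exact ICK.and_imp_left φ ψ
  inf_le_right := by rintro ⟨φ⟩ ⟨ψ⟩; exact ICK.and_imp_right φ ψ
  le_inf := by rintro ⟨φ⟩ ⟨ψ⟩ ⟨χ⟩; exact ICK.imp_and
  le_sup_left := by rintro ⟨φ⟩ ⟨ψ⟩; exact ICK.imp_or_left φ ψ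
  le_sup_right := by rintro ⟨φ⟩ ⟨ψ⟩; exact ICK.imp_or_right φ ψ
  sup_le := by rintro ⟨φ⟩ ⟨ψ⟩ ⟨χ⟩; exact ICK.or_imp
  bot_le := by rintro ⟨φ⟩; exact ICK.bot_imp φ
  le_top := by rintro ⟨φ⟩; exact ICK.imp_of (ICK.imp_self .bot)
  le_himp_iff := by rintro ⟨φ⟩ ⟨ψ⟩ ⟨χ⟩; exact ICK.imp_imp_iff
  himp_bot := by rintro ⟨φ⟩; rfl

instance : CondHeyting (Lindenbaum Γ) where
  cond := Quotient.map₂ .cond fun _ _ h _ _ k =>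
    ICK.cIff_iff.1 (.cond_congr (ICK.cIff_iff.2 h) (ICK.cIff_iff.2 k))
  cond_inf := by
    rintro ⟨φ⟩ ⟨ψ⟩ ⟨χ⟩
    exact Quotient.sound (ICK.cIff_iff.1 (.subst (ICK.axiomSubst φ ψ χ) .kc))
  cond_top := by
    rintro ⟨φ⟩
    exact Quotient.sound (ICK.cIff_iff.1 (.subst (ICK.axiomSubst φ φ φ) .nc))

theorem mk_eq_top_iff {φ : CForm} : mk Γ φ = ⊤ ↔ ICK Γ φ :=
  top_le_iff.symm.trans
    ⟨fun h : ICK Γ (.imp cTop φ) => h.mp (.imp_self .bot), fun h => h.imp_of (ψ := cTop)⟩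

theorem evalCHA_mk (φ : CForm) : evalCHA (fun p => mk Γ (.var p)) φ = mk Γ φ := by
  induction φ with
  | var | bot => rfl
  | and _ _ ihφ ihψ | or _ _ ihφ ihψ | imp _ _ ihφ ihψ | cond _ _ ihφ ihψ =>
    simp only [evalCHA, ihφ, ihψ]; rfl

end Lindenbaum

theorem ick_of_chaSat_lindenbaum {Γ : Set CForm} {φ : CForm} (h : chaSat (Lindenbaum Γ) φ) :
    ICK Γ φ :=
  Lindenbaum.mk_eq_top_iff.1 (Lindenbaum.evalCHA_mk φ ▸ h _)

/-! ### Prime filters -/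

/-- The type of prime filters of a lattice. -/
def PrimeFilter (A : Type) [Lattice A] : Type := {x : Set A // IsPrimeFilter x}

namespace PrimeFilter

instance {A : Type} [Lattice A] : SetLike (PrimeFilter A) A where
  coe := Subtype.val
  coe_injective := Subtype.val_injective

section Lattice

variable {A : Type} [Lattice A]

theorem mem_of_le {x : PrimeFilter A} {a b : A} (ha : a ∈ x) (hab : a ≤ b) : b ∈ x :=
  x.2.2.2.1 ha hab

theorem top_mem [OrderTop A] (x : PrimeFilter A) : ⊤ ∈ x :=
  let ⟨_, ha⟩ := x.2.1
  mem_of_le ha le_top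

theorem bot_notMem [OrderBot A] (x : PrimeFilter A) : ⊥ ∉ x := fun h =>
  x.2.2.1 (Set.eq_univ_of_forall fun _ => mem_of_le h bot_le)

theorem inf_mem_iff {x : PrimeFilter A} {a b : A} : a ⊓ b ∈ x ↔ a ∈ x ∧ b ∈ x :=
  ⟨fun h => ⟨mem_of_le h inf_le_left, mem_of_le h inf_le_right⟩, fun h => x.2.2.2.2.1 h.1 h.2⟩

theorem sup_mem_iff {x : PrimeFilter A} {a b : A} : a ⊔ b ∈ x ↔ a ∈ x ∨ b ∈ x :=
  ⟨fun h => x.2.2.2.2.2 h, fun h => h.elim (mem_of_le · le_sup_left) (mem_of_le · le_sup_right)⟩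

/-- The Stone map, sending `a` to the set of prime filters that contain `a`. -/
def hat (a : A) : Set (PrimeFilter A) := {x | a ∈ x}

theorem hat_bot [OrderBot A] : hat (⊥ : A) = ∅ :=
  Set.eq_empty_of_forall_notMem bot_notMem

theorem hat_inf (a b : A) : hat (a ⊓ b) = hat a ∩ hat b :=
  Set.ext fun _ => inf_mem_iff

theorem hat_sup (a b : A) : hat (a ⊔ b) = hat a ∪ hat b :=
  Set.ext fun _ => sup_mem_iff

theorem isPFilter_preimage {B : Type} [SemilatticeInf B] [OrderTop B] [OrderTop A]
    (f : InfTopHom B A) (x : PrimeFilter A) : Order.IsPFilter (f ⁻¹' (x : Set A)) := by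
  refine .of_def ⟨⊤, ?_⟩ (fun b hb c hc => ⟨b ⊓ c, ?_, inf_le_left, inf_le_right⟩) fun hbc hb => ?_
  · simpa only [Set.mem_preimage, SetLike.mem_coe, map_top] using x.top_mem
  · simpa only [Set.mem_preimage, SetLike.mem_coe, map_inf] using inf_mem_iff.2 ⟨hb, hc⟩
  · exact mem_of_le hb (OrderHomClass.mono f hbc)

theorem isPrimeFilter_compl {J : Order.Ideal A} (hJ : J.IsPrime) :
    IsPrimeFilter (J : Set A)ᶜ := by
  refine ⟨?_, ?_, fun a b ha hab hb => ha (J.lower hab hb), fun a b ha hb hab => ?_,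
    fun a b hab => ?_⟩
  · exact Set.nonempty_compl.2 hJ.ne_univ
  · exact fun h => J.nonempty.ne_empty (Set.compl_univ_iff.1 h)
  · exact (hJ.mem_or_mem hab).elim ha hb
  · by_contra! h
    exact hab (J.sup_mem (not_not.1 h.1) (not_not.1 h.2))

end Lattice

section DistribLattice

variable {A : Type} [DistribLattice A]

theorem exists_subset_notMem {F : Order.PFilter A} {a : A} (ha : a ∉ F) :
    ∃ x : PrimeFilter A, (F : Set A) ⊆ x ∧ a ∉ x := by
  have hdisj : Disjoint (F : Set A) (Order.Ideal.principal a) :=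
    Set.disjoint_left.2 fun _ hb hba => ha (F.mem_of_le hba hb)
  obtain ⟨J, hJ, haJ, hFJ⟩ := DistribLattice.prime_ideal_of_disjoint_filter_ideal hdisj
  exact ⟨⟨_, isPrimeFilter_compl hJ⟩, hFJ.subset_compl_right,
    fun h => h (haJ Order.Ideal.mem_principal_self)⟩

theorem hat_subset_hat {a b : A} : hat a ⊆ hat b ↔ a ≤ b := by
  refine ⟨fun h => ?_, fun hab x hx => mem_of_le hx hab⟩
  by_contra hab
  obtain ⟨x, hax, hbx⟩ := exists_subset_notMem (F := .principal a) hab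
  exact hbx (h (hax le_rfl))

theorem hat_injective : Function.Injective (hat : A → Set (PrimeFilter A)) := fun _ _ h =>
  (hat_subset_hat.1 h.subset).antisymm (hat_subset_hat.1 h.superset)

theorem map_mem_iff {B : Type} [Lattice B] [OrderTop B] [OrderTop A] (f : InfTopHom A B)
    {x : PrimeFilter B} {b : A} :
    f b ∈ x ↔ ∀ y : PrimeFilter A, (∀ c, f c ∈ x → c ∈ y) → b ∈ y := by
  refine ⟨fun hb y hy => hy b hb, fun h => ?_⟩
  by_contra hb
  obtain ⟨y, hxy, hby⟩ := exists_subset_notMem (F := (isPFilter_preimage f x).toPFilter) hb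
  exact hby (h y hxy)

end DistribLattice

theorem hat_himp {A : Type} [HeytingAlgebra A] (a b : A) :
    hat (a ⇨ b) = {x : PrimeFilter A | ∀ y : PrimeFilter A,
      (x : Set A) ⊆ y → y ∈ hat a → y ∈ hat b} := by
  let himpHom : InfTopHom A A := ⟨⟨(a ⇨ ·), fun b c => himp_inf_distrib a b c⟩, himp_top⟩
  ext x
  refine ⟨fun hab y hxy ha => ?_, fun h => (map_mem_iff himpHom).2 fun y hy => ?_⟩
  · exact mem_of_le (inf_mem_iff.2 ⟨hxy hab, ha⟩) himp_inf_le
  · have himp_self_mem : a ⇨ a ∈ x := by simpa only [himp_self] using x.top_mem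
    exact h y (fun c hc => hy c (mem_of_le hc le_himp)) (hy a himp_self_mem)

end PrimeFilter

/-! ### Representation of conditional Heyting algebras -/

namespace CondHeyting

open PrimeFilter

variable {A : Type} [CondHeyting A]

/-- The relations between prime filters that represent `⊳`, indexed by arbitrary sets of prime
filters. `primeRel s` is empty when `s` is not of the form `hat a`. -/
def primeRel (s : Set (PrimeFilter A)) (x y : PrimeFilter A) : Prop :=
  ∃ a, s = hat a ∧ ∀ c, cond a c ∈ x → c ∈ y

theorem primeRel_hat {a : A} {x y : PrimeFilter A} :
    primeRel (hat a) x y ↔ ∀ c, cond a c ∈ x → c ∈ y :=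
  ⟨fun ⟨_, ha, h⟩ => hat_injective ha ▸ h, fun h => ⟨a, rfl, h⟩⟩

theorem hat_cond (a b : A) :
    hat (cond a b) = {x | ∀ y, primeRel (hat a) x y → y ∈ hat b} := by
  let condHom : InfTopHom A A := ⟨⟨cond a, cond_inf a⟩, cond_top a⟩
  simp only [primeRel_hat]
  exact Set.ext fun x => map_mem_iff condHom

variable (A) in
/-- The conditional Kripke frame of prime filters of a conditional Heyting algebra. -/
def primeFrame [Nonempty (PrimeFilter A)] : CondFrame where
  X := PrimeFilter A
  ne := inferInstance
  le x y := (x : Set A) ⊆ y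
  le_refl _ := subset_rfl
  le_trans _ _ _ := Set.Subset.trans
  R := primeRel
  coh := by
    rintro _ _ x y z hxy ⟨a, rfl, hyz⟩
    exact ⟨z, ⟨a, rfl, fun c hc => hyz c (hxy hc)⟩, subset_rfl⟩

theorem csat_primeFrame [Nonempty (PrimeFilter A)] (σ : ℕ → A) (φ : CForm) :
    csat (primeFrame A).le (primeFrame A).R (fun p => hat (σ p)) φ = hat (evalCHA σ φ) := by
  induction φ with
  | var => rfl
  | bot => exact hat_bot.symm
  | and φ ψ ihφ ihψ => simp only [csat, evalCHA, ihφ, ihψ, hat_inf]; rfl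
  | or φ ψ ihφ ihψ => simp only [csat, evalCHA, ihφ, ihψ, hat_sup]; rfl
  | imp φ ψ ihφ ihψ => simp only [csat, evalCHA, ihφ, ihψ, hat_himp]; rfl
  | cond φ ψ ihφ ihψ => simp only [csat, evalCHA, ihφ, ihψ, hat_cond]; rfl

theorem chaSat_of_valid {φ : CForm} (h : ∀ F : CondFrame, F.valid φ) : chaSat A φ := by
  intro σ
  refine top_le_iff.1 (hat_subset_hat.1 fun x _ => ?_)
  have : Nonempty (PrimeFilter A) := ⟨x⟩
  rw [← csat_primeFrame]
  exact h (primeFrame A) (fun p => hat (σ p)) (fun _ _ _ hyz hy => hyz hy) x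

end CondHeyting

/-- `ICK` is sound and complete with respect to conditional
Kripke frames: `φ ∈ ICK` iff `φ` is valid on every conditional Kripke
frame. -/
theorem ick_kripke_completeness (φ : CForm) :
    ICK ∅ φ ↔ ∀ F : CondFrame, F.valid φ := by
  constructor
  · exact fun h F => F.valid_of_ick (fun _ hγ => hγ.elim) h
  · exact fun h => ick_of_chaSat_lindenbaum (CondHeyting.chaSat_of_valid h)
end

section
/- Let 𝔛 be a conditional Esakia space and let F be a fill-in of 𝔛. Then for every L_⊳-formula φ, if φ is not valid on 𝔛 then φ is not valid on F. -/
/-! A valuation into clopen upsets makes every truth set a clopen upset, so evaluating a formula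
under it consults the relations only at clopen upsets, where a fill-in agrees with the space.
Hence a clopen valuation refutes the same formulas, at the same points, on both. -/

section IsUpset

variable {X : Type} {le : X → X → Prop} {a b : Set X}

theorem isUpset_empty : IsUpset le ∅ := fun _ _ _ h => h

theorem IsUpset.inter (ha : IsUpset le a) (hb : IsUpset le b) : IsUpset le (a ∩ b) :=
  fun _ _ hxy hx => ⟨ha hxy hx.1, hb hxy hx.2⟩

theorem IsUpset.union (ha : IsUpset le a) (hb : IsUpset le b) : IsUpset le (a ∪ b) :=
  fun _ _ hxy hx => hx.imp (ha hxy) (hb hxy)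

theorem isUpset_setOfPred_forall_rel_mem {R : X → X → Prop}
    (hR : ∀ ⦃x y z⦄, le x y → R y z → R x z) (b : Set X) :
    IsUpset le {x | ∀ y, R x y → y ∈ b} :=
  fun _ _ hxy hx z hyz => hx z (hR hxy hyz)

end IsUpset

theorem csat_congr_rel {X : Type} {le : X → X → Prop} {R R' : Set X → X → X → Prop}
    {V : ℕ → Set X} (hR : ∀ φ, R' (csat le R V φ) = R (csat le R V φ)) (φ : CForm) :
    csat le R' V φ = csat le R V φ := by
  induction φ with
  | var | bot => rfl
  | and φ ψ ihφ ihψ | or φ ψ ihφ ihψ | imp φ ψ ihφ ihψ => simp only [csat, ihφ, ihψ]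
  | cond φ ψ ihφ ihψ => simp only [csat, ihφ, ihψ, hR]

namespace CondEsakia

attribute [local instance] CondEsakia.top

variable {S : CondEsakia} {a b : Set S.X}

theorem clopUp_empty : S.ClopUp ∅ := ⟨isClopen_empty, isUpset_empty⟩

theorem ClopUp.inter (ha : S.ClopUp a) (hb : S.ClopUp b) : S.ClopUp (a ∩ b) :=
  ⟨ha.1.inter hb.1, ha.2.inter hb.2⟩

theorem ClopUp.union (ha : S.ClopUp a) (hb : S.ClopUp b) : S.ClopUp (a ∪ b) :=
  ⟨ha.1.union hb.1, ha.2.union hb.2⟩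

theorem isClopen_setOfPred_forall_le_imp (ha : IsClopen a) (hb : IsClopen b) :
    IsClopen {x | ∀ y, S.le x y → y ∈ a → y ∈ b} := by
  have compl_down_diff :
      {x | ∃ y ∈ a \ b, S.le x y}ᶜ = {x | ∀ y, S.le x y → y ∈ a → y ∈ b} := by
    ext x
    simp only [Set.mem_compl_iff, Set.mem_ofPred_eq, Set.mem_sdiff]
    grind
  exact compl_down_diff ▸ (S.down_clopen _ (ha.diff hb)).compl

theorem clopUp_setOfPred_forall_le_imp (ha : IsClopen a) (hb : IsClopen b) :
    S.ClopUp {x | ∀ y, S.le x y → y ∈ a → y ∈ b} :=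
  ⟨isClopen_setOfPred_forall_le_imp ha hb,
    isUpset_setOfPred_forall_rel_mem S.le_trans {y | y ∈ a → y ∈ b}⟩

theorem ClopUp.rel_of_le_of_rel (ha : S.ClopUp a) ⦃x y z : S.X⦄ (hxy : S.le x y)
    (hyz : S.R a y z) : S.R a x z :=
  (S.coh a ha.1 ha.2 x z).1 ⟨y, z, hxy, hyz, S.le_refl z⟩

theorem ClopUp.setOfPred_forall_rel_mem (ha : S.ClopUp a) (hb : S.ClopUp b) :
    S.ClopUp {x | ∀ y, S.R a x y → y ∈ b} :=
  ⟨S.box_clopen a b ha.1 ha.2 hb.1 hb.2, isUpset_setOfPred_forall_rel_mem ha.rel_of_le_of_rel b⟩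

theorem clopUp_csat {V : ℕ → Set S.X} (hV : ∀ p, S.ClopUp (V p)) (φ : CForm) :
    S.ClopUp (csat S.le S.R V φ) := by
  induction φ with
  | var p => exact hV p
  | bot => exact clopUp_empty
  | and φ ψ hφ hψ => exact hφ.inter hψ
  | or φ ψ hφ hψ => exact hφ.union hψ
  | imp φ ψ hφ hψ => exact clopUp_setOfPred_forall_le_imp hφ.1 hψ.1
  | cond φ ψ hφ hψ => exact hφ.setOfPred_forall_rel_mem hψ

theorem csat_eq_of_agree_on_clopUp {R' : Set S.X → S.X → S.X → Prop}
    (hR' : ∀ a, S.ClopUp a → R' a = S.R a) {V : ℕ → Set S.X} (hV : ∀ p, S.ClopUp (V p))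
    (φ : CForm) : csat S.le R' V φ = csat S.le S.R V φ :=
  csat_congr_rel (fun ψ => hR' _ (clopUp_csat hV ψ)) φ

end CondEsakia

theorem fillin_inherits_refutation_general (S : CondEsakia)
    (R' : Set S.X → S.X → S.X → Prop) (hfill : ∀ a : Set S.X, S.ClopUp a → R' a = S.R a)
    (φ : CForm) (h : ¬ S.valid φ) :
    ∃ V : ℕ → Set S.X, (∀ p, S.ClopUp (V p)) ∧ ∃ x, x ∉ csat S.le R' V φ := by
  obtain ⟨V, hV, x, hx⟩ :
      ∃ V : ℕ → Set S.X, (∀ p, S.ClopUp (V p)) ∧ ∃ x, x ∉ csat S.le S.R V φ := by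
    simpa only [CondEsakia.valid, not_forall, exists_prop] using h
  exact ⟨V, hV, x, by rwa [CondEsakia.csat_eq_of_agree_on_clopUp hfill hV φ]⟩

/-- If `F` is a fill-in of the conditional Esakia space `S`
(a conditional Kripke frame on the same order whose relations agree with those
of `S` on all clopen upsets), then every formula not valid on `S` is not valid
on `F`. -/
theorem fillin_inherits_refutation (S : CondEsakia)
    (R' : Set S.X → S.X → S.X → Prop)
    (hcoh : ∀ a : Set S.X, IsUpset S.le a →
      ∀ ⦃x y z : S.X⦄, S.le x y → R' a y z → ∃ w, R' a x w ∧ S.le w z)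
    (hfill : ∀ a : Set S.X, S.ClopUp a → R' a = S.R a)
    (φ : CForm) (h : ¬ S.valid φ) :
    ¬ (∀ V : ℕ → Set S.X, (∀ p, IsUpset S.le (V p)) →
        ∀ x, x ∈ csat S.le R' V φ) := by
  obtain ⟨V, hV, x, hx⟩ := fillin_inherits_refutation_general S R' hfill φ h
  exact fun hvalid => hx (hvalid V (fun p => (hV p).2) x)
end
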